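/- arXiv:2205.07137 — 9 statements merged into one kernel-verified Lean document; each statement's English description precedes it below -/
import Mathlib

section
/- Let 0 → M → N → L → 0 be a short exact sequence of R-modules. If M and L are u-S-finitely presented, then N is u-S-finitely presented. Moreover, if M and L are u-S-finitely presented with respect to the same s ∈ S, then N is u-S-finitely presented with respect to an element of S determined by s. -/
/-!
Let `α : F → M` and `β : F' → L` be the given maps from finitely presented modules,
with `ρ : Q → P` and `π : P → F'` a presentation of `F'` by finite free modules. Lift `β ∘ π` along
`g` to `h : P → N`. As in the horseshoe lemma, `(x, p) ↦ f (α x) + h p` maps `F × P` to `N`.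
The map `h ∘ ρ` lands in `ker g = range f`, so `s • h ∘ ρ` lands in the range of `f ∘ α` and,
`Q` being free, lifts to `y : Q → F`. The quotient of `F × P` by the relations
`(y q, -s • ρ q)` is finitely presented and maps to `N`, with kernel killed by `s ^ 3` and
cokernel killed by `s ^ 2`; this is `UsFPWrt.of_shortExact`. Two different elements `s`, `t` are
reduced to a common one by passing to the product `s * t`.
-/

universe u

variable {R : Type u} [CommRing R]

/-- `M` is uniformly `S`-finitely presented with respect to `s`: there is an exact sequence
`0 → T₁ → F → M → T₂ → 0` with `F` finitely presented and `s • T₁ = 0 = s • T₂`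
(here `T₁ = ker f` and `T₂ = coker f`). -/
def UsFPWrt (s : R) (M : Type u) [AddCommGroup M] [Module R M] : Prop :=
  ∃ (F : Type u) (_ : AddCommGroup F) (_ : Module R F) (f : F →ₗ[R] M),
    Module.FinitePresentation R F ∧ (∀ x ∈ LinearMap.ker f, s • x = 0) ∧
      (∀ m : M, s • m ∈ LinearMap.range f)

theorem UsFPWrt.mul_left {s : R} {M : Type u} [AddCommGroup M] [Module R M]
    (h : UsFPWrt s M) (t : R) : UsFPWrt (t * s) M := by
  obtain ⟨F, _, _, α, hF, hker, hcoker⟩ := h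
  refine ⟨F, _, _, α, hF, fun x hx => ?_, fun m => ?_⟩
  · rw [mul_smul, hker x hx, smul_zero]
  · rw [mul_smul]
    exact Submodule.smul_mem _ _ (hcoker m)

theorem UsFPWrt.of_shortExact {s : R}
    {M N L : Type u} [AddCommGroup M] [Module R M] [AddCommGroup N] [Module R N]
    [AddCommGroup L] [Module R L] (f : M →ₗ[R] N) (g : N →ₗ[R] L)
    (hf : Function.Injective f) (hg : Function.Surjective g)
    (hfg : LinearMap.ker g = LinearMap.range f)
    (hM : UsFPWrt s M) (hL : UsFPWrt s L) : UsFPWrt (s ^ 3) N := by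
  obtain ⟨F, _, _, α, hF, hαker, hαcoker⟩ := hM
  obtain ⟨F', _, _, β, hF', hβker, hβcoker⟩ := hL
  obtain ⟨n, m, π, ρ, hπ, hρ⟩ := Module.FinitePresentation.exists_fin' R F'
  obtain ⟨h, hh⟩ := Module.projective_lifting_property g (β ∘ₗ π) hg
  have hgh : ∀ p, g (h p) = β (π p) := fun p => LinearMap.congr_fun hh p
  have hexact : ∀ z, g z = 0 → ∃ w, f w = z := fun z hz => by
    rwa [← LinearMap.mem_ker, hfg] at hz
  have hmem : ∀ q, (s • h ∘ₗ ρ) q ∈ LinearMap.range (f ∘ₗ α) := fun q => by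
    obtain ⟨w, hw⟩ := hexact (h (ρ q)) (by rw [hgh, hρ.apply_apply_eq_zero, map_zero])
    obtain ⟨x, hx⟩ := hαcoker w
    exact ⟨x, by simp [hx, hw]⟩
  obtain ⟨y, hy⟩ := Module.projective_lifting_property (f ∘ₗ α).rangeRestrict
    ((s • h ∘ₗ ρ).codRestrict _ hmem) (LinearMap.surjective_rangeRestrict _)
  have hfy : ∀ q, f (α (y q)) = s • h (ρ q) := fun q =>
    congrArg Subtype.val (LinearMap.congr_fun hy q)
  -- `D` parametrizes the relations imposed on `F × P`.
  let D : (Fin m → R) →ₗ[R] F × (Fin n → R) := y.prod (-(s • ρ))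
  let φ : F × (Fin n → R) →ₗ[R] N := (f ∘ₗ α).coprod h
  have hD : LinearMap.range D ≤ LinearMap.ker φ := by
    rintro _ ⟨q, rfl⟩
    simp [D, φ, hfy]
  refine ⟨(F × (Fin n → R)) ⧸ LinearMap.range D, inferInstance, inferInstance,
    (LinearMap.range D).liftQ φ hD, ?_, ?_, ?_⟩
  · refine Module.finitePresentation_of_surjective (LinearMap.range D).mkQ
      (Submodule.mkQ_surjective _) ?_
    rw [Submodule.ker_mkQ]
    exact Submodule.FG.of_finite
  · intro z hz
    obtain ⟨⟨x, p⟩, rfl⟩ := Submodule.mkQ_surjective _ z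
    have hxp : f (α x) + h p = 0 := by simpa [φ] using hz
    have hβp : β (π p) = 0 := by
      have hgf : g (f (α x)) = 0 := by
        rw [← LinearMap.mem_ker, hfg]
        exact ⟨_, rfl⟩
      simpa [hgf, hgh] using congrArg g hxp
    obtain ⟨q, hq⟩ := (hρ (s • p)).1 (by rw [map_smul, hβker _ hβp])
    -- Modulo the relations, `s ^ 2 • (x, p) = (s ^ 2 • x + y q, 0)`, and the first entry
    -- of the right-hand side is in `ker α`.
    have hx : s • (s ^ 2 • x + y q) = 0 := by
      refine hαker _ (hf ?_)
      have hx2 : f (α (s ^ 2 • x + y q)) = s ^ 2 • (f (α x) + h p) := by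
        rw [map_add, map_add, hfy, hq, map_smul, map_smul, map_smul, smul_smul, ← pow_two,
          smul_add]
      rw [hx2, hxp, smul_zero, map_zero]
    rw [← map_smul, Submodule.mkQ_apply, Submodule.Quotient.mk_eq_zero]
    refine ⟨-(s • q), Prod.ext ?_ ?_⟩
    · have hx3 : s ^ 3 • x + s • y q = 0 := by
        rw [← hx, smul_add, smul_smul, ← pow_succ']
      simpa [D] using (eq_neg_of_add_eq_zero_left hx3).symm
    · simp [D, hq, smul_smul, pow_succ, mul_assoc]
  · intro z
    obtain ⟨v, hv⟩ := hβcoker (g z)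
    obtain ⟨p, rfl⟩ := hπ v
    obtain ⟨w, hw⟩ := hexact (s • z - h p) (by rw [map_sub, hgh, hv, map_smul, sub_self])
    obtain ⟨x, hx⟩ := hαcoker w
    refine ⟨(LinearMap.range D).mkQ (s • (x, s • p)), ?_⟩
    have hz : f (α x) + s • h p = s ^ 2 • z := by
      rw [hx, map_smul, hw, smul_sub, sub_add_cancel, smul_smul, pow_two]
    calc _ = s • (f (α x) + s • h p) := by simp [φ]
      _ = s ^ 3 • z := by rw [hz, smul_smul, ← pow_succ']

/-- If `0 → M → N → L → 0` is a short exact sequence of `R`-modules and `M`, `L` are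
`u`-`S`-finitely presented, then so is `N`.  Moreover, if `M` and `L` are `u`-`S`-finitely
presented with respect to the same `s ∈ S`, then `N` is `u`-`S`-finitely presented with
respect to an element of `S` determined by `s` (a power of `s`). -/
theorem usFP_of_shortExact (S : Submonoid R)
    {M N L : Type u} [AddCommGroup M] [Module R M] [AddCommGroup N] [Module R N]
    [AddCommGroup L] [Module R L]
    (f : M →ₗ[R] N) (g : N →ₗ[R] L)
    (hf : Function.Injective f) (hg : Function.Surjective g)
    (hfg : LinearMap.ker g = LinearMap.range f) :
    ((∃ s ∈ S, UsFPWrt s M) → (∃ s ∈ S, UsFPWrt s L) → ∃ s ∈ S, UsFPWrt s N) ∧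
    (∀ s ∈ S, UsFPWrt s M → UsFPWrt s L → ∃ n : ℕ, UsFPWrt (s ^ n) N) := by
  refine ⟨?_, fun s _ hM hL => ⟨3, UsFPWrt.of_shortExact f g hf hg hfg hM hL⟩⟩
  rintro ⟨s, hs, hM⟩ ⟨t, ht, hL⟩
  refine ⟨(s * t) ^ 3, S.pow_mem (S.mul_mem hs ht) 3, ?_⟩
  have hM' : UsFPWrt (s * t) M := mul_comm t s ▸ hM.mul_left t
  exact UsFPWrt.of_shortExact f g hf hg hfg hM' (hL.mul_left s)
end

section
/- A commutative ring R is S-Noetherian if and only if every S-finite R-module is u-S-finitely presented. -/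
/-!
Call a module `S`-Noetherian when each of its submodules is `S`-finite.

Forward direction: being `S`-Noetherian passes to extensions (`SNoeth.of_exact`), so `R ^ n` is
`S`-Noetherian as soon as `R` is. If `s • M` lies in a finitely generated submodule, the image of
`p : R ^ n → M`, choose a finitely generated `K ≤ ker p` with `t • ker p ≤ K`. Then
`R ^ n ⧸ K → M` has kernel killed by `t` and cokernel killed by `s`.

Backward direction: apply the hypothesis to the cyclic module `R ⧸ I`, obtaining
`f : R ^ n ⧸ N → R ⧸ I` with `N` finitely generated. Lift `f` to `h : R ^ n → R`, and lift a
preimage of `s • 1` to `a : R ^ n`, so that `h a = s + j` with `j ∈ I`. For `i ∈ I` the class of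
`i • a` lies in `ker f`, so `s • i • a ∈ N` and `s * i * (s + j) ∈ h(N)`.
Hence `s ^ 2 * I ⊆ h(N) + (j) ⊆ I`.
-/

universe u

variable {R : Type u} [CommRing R]

/-- `M` is `S`-finite with respect to `s`. -/
def SFiniteWrt (s : R) (M : Type u) [AddCommGroup M] [Module R M] : Prop :=
  ∃ F : Submodule R M, F.FG ∧ ∀ m : M, s • m ∈ F

/-- `P` is `S`-Noetherian: every submodule `N` has a finitely generated submodule containing
`s • N` for some `s ∈ S`. -/
def SNoeth (S : Submonoid R) (P : Type*) [AddCommGroup P] [Module R P] : Prop :=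
  ∀ N : Submodule R P, ∃ s ∈ S, ∃ K : Submodule R P, K.FG ∧ K ≤ N ∧ ∀ x ∈ N, s • x ∈ K

theorem exists_fg_lift {P Q : Type*} [AddCommGroup P] [Module R P] [AddCommGroup Q] [Module R Q]
    (g : P →ₗ[R] Q) (N : Submodule R P) (K : Submodule R Q) (hK : K.FG) (hKN : K ≤ N.map g) :
    ∃ K₁ : Submodule R P, K₁.FG ∧ K₁ ≤ N ∧ K₁.map g = K := by
  classical
  obtain ⟨t, rfl⟩ := hK
  have ht : (t : Set Q) ⊆ g '' (N : Set P) := fun x hx => hKN (Submodule.subset_span hx)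
  obtain ⟨t', ht', rfl⟩ := Finset.subset_set_image_iff.1 ht
  refine ⟨Submodule.span R t', ⟨t', rfl⟩, Submodule.span_le.2 ht', ?_⟩
  rw [Submodule.map_span, Finset.coe_image]

theorem SNoeth.of_exact {S : Submonoid R} {P' P P'' : Type*} [AddCommGroup P'] [Module R P']
    [AddCommGroup P] [Module R P] [AddCommGroup P''] [Module R P'']
    (f : P' →ₗ[R] P) (g : P →ₗ[R] P'') (hfg : ∀ x, g x = 0 → ∃ z, f z = x)
    (h' : SNoeth S P') (h'' : SNoeth S P'') : SNoeth S P := by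
  intro N
  obtain ⟨s, hs, K, hK, hKN, hsK⟩ := h'' (N.map g)
  obtain ⟨K₁, hK₁, hK₁N, rfl⟩ := exists_fg_lift g N K hK hKN
  obtain ⟨t, ht, L, hL, hLN, htL⟩ := h' (N.comap f)
  refine ⟨t * s, S.mul_mem ht hs, K₁ ⊔ L.map f, hK₁.sup (hL.map f),
    sup_le hK₁N (Submodule.map_le_iff_le_comap.2 hLN), fun x hx => ?_⟩
  obtain ⟨y, hy, hyx⟩ := hsK (g x) (Submodule.mem_map_of_mem hx)
  obtain ⟨z, hz⟩ := hfg (s • x - y) (by rw [map_sub, map_smul, hyx, sub_self])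
  have hzN : z ∈ N.comap f := by
    rw [Submodule.mem_comap, hz]
    exact N.sub_mem (N.smul_mem s hx) (hK₁N hy)
  have e : (t * s) • x = t • y + f (t • z) := by
    rw [map_smul, hz, smul_sub, mul_smul]; abel
  rw [e]
  exact Submodule.add_mem_sup (K₁.smul_mem t hy) (Submodule.mem_map_of_mem (htL z hzN))

theorem SNoeth.pi {S : Submonoid R} (h : SNoeth S R) (n : ℕ) : SNoeth S (Fin n → R) := by
  induction n with
  | zero =>
    intro N
    refine ⟨1, S.one_mem, ⊥, Submodule.fg_bot, bot_le, fun x _ => ?_⟩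
    rw [Subsingleton.elim ((1 : R) • x) 0]
    exact Submodule.zero_mem _
  | succ n ih =>
    refine SNoeth.of_exact (LinearMap.single R (fun _ : Fin (n + 1) => R) 0)
      (LinearMap.funLeft R R Fin.succ) (fun x hx => ⟨x 0, ?_⟩) h ih
    ext i
    refine Fin.cases ?_ (fun j => ?_) i
    · simp
    · have := congrFun hx j
      simp only [LinearMap.funLeft_apply, Pi.zero_apply] at this
      simp [this]

/-- A commutative ring `R` is `S`-Noetherian if and only if every `S`-finite `R`-module is
`u`-`S`-finitely presented. -/
theorem sNoetherian_iff_sFinite_usFP (S : Submonoid R) :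
    (∀ I : Ideal R, ∃ s ∈ S, ∃ K : Ideal R, K.FG ∧ K ≤ I ∧ ∀ x ∈ I, s * x ∈ K) ↔
    (∀ (M : Type u) (_ : AddCommGroup M) (_ : Module R M),
      (∃ s ∈ S, SFiniteWrt s M) → ∃ s ∈ S, UsFPWrt s M) := by
  constructor
  · rintro hR M _ _ ⟨s, hs, F, hF, hsF⟩
    obtain ⟨n, v, rfl⟩ := Submodule.fg_iff_exists_fin_generating_family.1 hF
    let p : (Fin n → R) →ₗ[R] M := Fintype.linearCombination R v
    have hp : LinearMap.range p = Submodule.span R (Set.range v) :=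
      Fintype.range_linearCombination R v
    obtain ⟨t, ht, K, hK, hKp, htK⟩ := SNoeth.pi (S := S) hR n (LinearMap.ker p)
    refine ⟨s * t, S.mul_mem hs ht, (Fin n → R) ⧸ K, inferInstance, inferInstance,
      K.liftQ p hKp, ?_, ?_, ?_⟩
    · exact Module.finitePresentation_of_surjective K.mkQ K.mkQ_surjective
        (by rwa [Submodule.ker_mkQ])
    · intro x hx
      obtain ⟨y, rfl⟩ := K.mkQ_surjective x
      have hy : t • y ∈ K := htK y (by simpa using hx)
      rw [mul_smul, ← map_smul, Submodule.mkQ_apply, (Submodule.Quotient.mk_eq_zero K).2 hy,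
        smul_zero]
    · intro m
      rw [Submodule.range_liftQ, hp, mul_comm, mul_smul]
      exact Submodule.smul_mem _ t (hsF m)
  · intro H I
    obtain ⟨s, hs, F, _, _, f, hF, hker, hran⟩ := H (R ⧸ I) inferInstance inferInstance
      ⟨1, S.one_mem, ⊤, Module.Finite.fg_top, fun _ => Submodule.mem_top⟩
    obtain ⟨n, N, e, hN⟩ := Module.FinitePresentation.exists_fin R F
    let q : (Fin n → R) →ₗ[R] F := e.symm.toLinearMap ∘ₗ N.mkQ
    have hq : Function.Surjective q := e.symm.surjective.comp N.mkQ_surjective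
    have hq0 : ∀ x, q x = 0 ↔ x ∈ N := fun x => by simp [q]
    obtain ⟨h, hh⟩ := Module.projective_lifting_property (Submodule.mkQ I) (f ∘ₗ q)
      (Submodule.mkQ_surjective I)
    have hh' : ∀ x, Submodule.Quotient.mk (p := I) (h x) = f (q x) :=
      fun x => LinearMap.congr_fun hh x
    obtain ⟨b, hb⟩ := hran (Submodule.Quotient.mk 1)
    obtain ⟨a, rfl⟩ := hq b
    have hj : h a - s ∈ I := by
      rw [← Submodule.Quotient.eq, hh', hb, ← Submodule.Quotient.mk_smul, smul_eq_mul, mul_one]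
    refine ⟨s * s, S.mul_mem hs hs, N.map h ⊔ Ideal.span {h a - s},
      (hN.map h).sup (Submodule.fg_span_singleton _), sup_le ?_ ?_, fun i hi => ?_⟩
    · rintro _ ⟨x, hx, rfl⟩
      rw [← Submodule.Quotient.mk_eq_zero I, hh', (hq0 x).2 hx, map_zero]
    · exact (Ideal.span_singleton_le_iff_mem I).2 hj
    · have h1 : q (i • a) ∈ LinearMap.ker f := by
        rw [LinearMap.mem_ker, ← hh', Submodule.Quotient.mk_eq_zero, map_smul, smul_eq_mul]
        exact I.mul_mem_right _ hi
      have h2 : s • i • a ∈ N := by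
        rw [← hq0, map_smul]
        exact hker _ h1
      have e : s * s * i = h (s • i • a) + (-(s * i)) * (h a - s) := by
        simp only [map_smul, smul_eq_mul]; ring
      rw [e]
      exact Submodule.add_mem_sup (Submodule.mem_map_of_mem h2)
        (Ideal.mul_mem_left _ _ (Ideal.mem_span_singleton_self _))
end

section
/- Let S be a multiplicative subset of R consisting of finitely many elements. Then an R-module M is u-S-finitely presented if and only if the localization M_S is a finitely presented R_S-module. -/
/-!
Since `S` is finite, the product `s` of its elements lies in `S` and is divisible by every element
of `S`. In particular `s ^ 2 ∣ s`, say `s = s * s * c`, and `s * c` is an idempotent that maps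
to `1` in `R_S`. It follows that `M → M_S` is onto with kernel the `s`-torsion of `M`, so
`M_S ≃ sM`; for `M = R` this kernel is generated by `1 - s * c`, so `R_S` is a finitely presented
`R`-module.

If `M_S` is finitely presented over `R_S`, it is then finitely presented over `R`, hence so is
`sM`, and the inclusion `sM → M` is injective with cokernel killed by `s`. Conversely, a map with
kernel and cokernel killed by an element of `S` becomes an isomorphism after localizing at `S`,
and localization preserves finite presentation.
-/

universe u

variable {R : Type u} [CommRing R]

lemma exists_mem_forall_dvd_of_finite (S : Submonoid R) (hS : (S : Set R).Finite) :
    ∃ s ∈ S, ∀ t ∈ S, t ∣ s :=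
  ⟨∏ t ∈ hS.toFinset, t, S.prod_mem fun t ht => by simpa using ht,
    fun t ht => Finset.dvd_prod_of_mem (fun x => x) (by simpa using ht)⟩

lemma mkLinearMap_eq_zero_iff_of_forall_dvd {S : Submonoid R} {s : R} (hs : s ∈ S)
    (hd : ∀ t ∈ S, t ∣ s) {M : Type*} [AddCommGroup M] [Module R M] (m : M) :
    LocalizedModule.mkLinearMap S M m = 0 ↔ s • m = 0 := by
  rw [IsLocalizedModule.eq_zero_iff S]
  constructor
  · rintro ⟨t, ht⟩
    obtain ⟨d, rfl⟩ := hd t t.2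
    rw [mul_comm, mul_smul]
    have : (t : R) • m = 0 := ht
    rw [this, smul_zero]
  · intro h
    exact ⟨⟨s, hs⟩, h⟩

/-- If `s = t * d` and `s = s * s * c`, then `m / t` is the image of `(d * c) • m`. -/
lemma mkLinearMap_surjective_of_forall_dvd {S : Submonoid R} {s : R} (hs : s ∈ S)
    (hd : ∀ t ∈ S, t ∣ s) (M : Type*) [AddCommGroup M] [Module R M] :
    Function.Surjective (LocalizedModule.mkLinearMap S M) := by
  obtain ⟨c, hc⟩ := hd _ (S.mul_mem hs hs)
  intro x
  induction x using LocalizedModule.induction_on with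
  | h m t =>
    obtain ⟨d, hd⟩ := hd t t.2
    refine ⟨(d * c) • m, ?_⟩
    rw [LocalizedModule.mkLinearMap_apply, LocalizedModule.mk_eq]
    refine ⟨⟨s, hs⟩, ?_⟩
    simp only [Submonoid.smul_def, smul_smul, OneMemClass.coe_one, mul_one]
    congr 1
    linear_combination (-s * c) * hd - hc

lemma localization_finitePresentation_of_forall_dvd {S : Submonoid R} {s : R} (hs : s ∈ S)
    (hd : ∀ t ∈ S, t ∣ s) : Module.FinitePresentation R (Localization S) := by
  have hker (r : R) := mkLinearMap_eq_zero_iff_of_forall_dvd hs hd r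
  have hsurj := mkLinearMap_surjective_of_forall_dvd hs hd R
  have : Module.FinitePresentation R (LocalizedModule S R) := by
    refine Module.finitePresentation_of_surjective _ hsurj ?_
    obtain ⟨c, hc⟩ := hd _ (S.mul_mem hs hs)
    refine ⟨{1 - s * c}, le_antisymm ?_ fun r hr => ?_⟩
    · rw [Submodule.span_le]
      simp only [Finset.coe_singleton, Set.singleton_subset_iff, SetLike.mem_coe,
        LinearMap.mem_ker, hker, smul_eq_mul]
      linear_combination hc
    · rw [LinearMap.mem_ker, hker, smul_eq_mul] at hr
      rw [Finset.coe_singleton, Submodule.mem_span_singleton]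
      exact ⟨r, by rw [smul_eq_mul]; linear_combination (-c) * hr⟩
  exact Module.FinitePresentation.of_equiv
    (IsLocalizedModule.linearEquiv S (LocalizedModule.mkLinearMap S R)
      (Algebra.linearMap R (Localization S)))

/-- The isomorphism `M_S ≃ sM`, through the common quotient of `M` by its `s`-torsion. -/
noncomputable def localizedModuleEquivRange {S : Submonoid R} {s : R} (hs : s ∈ S)
    (hd : ∀ t ∈ S, t ∣ s) (M : Type*) [AddCommGroup M] [Module R M] :
    LocalizedModule S M ≃ₗ[R] LinearMap.range (LinearMap.lsmul R M s) :=
  (LinearMap.quotKerEquivOfSurjective _ (mkLinearMap_surjective_of_forall_dvd hs hd M)).symm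
    |>.trans (Submodule.quotEquivOfEq _ _ (by
      ext m
      rw [LinearMap.mem_ker, LinearMap.mem_ker, mkLinearMap_eq_zero_iff_of_forall_dvd hs hd]
      rfl))
    |>.trans (LinearMap.quotKerEquivRange _)

lemma localizedModule_map_bijective {S : Submonoid R} {s : R} (hs : s ∈ S)
    {F M : Type*} [AddCommGroup F] [Module R F] [AddCommGroup M] [Module R M] (f : F →ₗ[R] M)
    (hker : ∀ x ∈ LinearMap.ker f, s • x = 0) (hrange : ∀ m : M, s • m ∈ LinearMap.range f) :
    Function.Bijective (LocalizedModule.map S f) := by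
  constructor
  · rw [injective_iff_map_eq_zero]
    intro x
    induction x using LocalizedModule.induction_on with
    | h x t =>
      rw [LocalizedModule.map_mk, IsLocalizedModule.mk_eq_mk', IsLocalizedModule.mk_eq_mk',
        IsLocalizedModule.mk'_eq_zero', IsLocalizedModule.mk'_eq_zero']
      rintro ⟨u, hu⟩
      rw [Submonoid.smul_def, ← map_smul] at hu
      exact ⟨⟨s, hs⟩ * u, by rw [mul_smul]; exact hker _ hu⟩
  · intro y
    induction y using LocalizedModule.induction_on with
    | h m t =>
      obtain ⟨x, hx⟩ := hrange m
      refine ⟨LocalizedModule.mk x (⟨s, hs⟩ * t), ?_⟩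
      rw [LocalizedModule.map_mk, hx]
      exact LocalizedModule.mk_cancel_common_left ⟨s, hs⟩ t m

/-- Let `S` be a multiplicative subset of `R` consisting of finitely many elements.  Then an
`R`-module `M` is `u`-`S`-finitely presented if and only if `M_S` is a finitely presented
`R_S`-module. -/
theorem usFP_iff_localization_finitePresentation (S : Submonoid R)
    (hS : (S : Set R).Finite)
    (M : Type u) [AddCommGroup M] [Module R M] :
    (∃ s ∈ S, UsFPWrt s M) ↔
      Module.FinitePresentation (Localization S) (LocalizedModule S M) := by
  constructor
  · rintro ⟨s, hs, F, _, _, f, _, hker, hrange⟩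
    exact Module.FinitePresentation.of_equiv
      (LinearEquiv.ofBijective _ (localizedModule_map_bijective hs f hker hrange))
  · intro _
    obtain ⟨s, hs, hd⟩ := exists_mem_forall_dvd_of_finite S hS
    have := localization_finitePresentation_of_forall_dvd hs hd
    have : Module.FinitePresentation R (LocalizedModule S M) :=
      Module.FinitePresentation.trans R (LocalizedModule S M) (Localization S)
    refine ⟨s, hs, LinearMap.range (LinearMap.lsmul R M s), inferInstance, inferInstance,
      Submodule.subtype _, Module.FinitePresentation.of_equiv (localizedModuleEquivRange hs hd M),
      fun x hx => ?_, fun m => ?_⟩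
    · rw [Submodule.ker_subtype, Submodule.mem_bot] at hx
      rw [hx, smul_zero]
    · rw [Submodule.range_subtype]
      exact ⟨m, rfl⟩
end

section
/- An R-module M is finitely generated if and only if for every maximal ideal m of R, M is (R∖m)-finite, i.e., there exist s ∉ m and a finitely generated submodule F of M with s•M ⊆ F. -/
/-!
The elements `s : R` for which `s • M` lies in a finitely generated submodule form an ideal
(`sFiniteIdeal`). If `M` is `(R ∖ m)`-finite for every maximal `m`, this ideal is contained in no
maximal ideal, hence contains `1`, which says that `M` itself is finitely generated.
-/

universe u

variable {R : Type u} [CommRing R]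

/-- The ideal of all `s : R` that multiply `M` into some finitely generated submodule. Closure
under addition holds because the sum of two finitely generated submodules is finitely generated. -/
def sFiniteIdeal (R : Type u) [CommRing R] (M : Type u) [AddCommGroup M] [Module R M] :
    Ideal R where
  carrier := {s | SFiniteWrt s M}
  zero_mem' := ⟨⊥, Submodule.fg_bot, fun m => by simp⟩
  add_mem' := by
    rintro a b ⟨F, hF, ha⟩ ⟨G, hG, hb⟩
    refine ⟨F ⊔ G, hF.sup hG, fun m => ?_⟩
    rw [add_smul]
    exact Submodule.add_mem_sup (ha m) (hb m)
  smul_mem' := by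
    rintro c a ⟨F, hF, ha⟩
    refine ⟨F, hF, fun m => ?_⟩
    rw [smul_eq_mul, mul_smul]
    exact F.smul_mem c (ha m)

/-- An `R`-module `M` is finitely generated if and only if for every maximal ideal `m` of `R`,
`M` is `(R ∖ m)`-finite, i.e. there exist `s ∉ m` and a finitely generated submodule `F` of `M`
with `s • M ⊆ F`. -/
theorem finite_iff_pFinite_of_maximal (M : Type u) [AddCommGroup M] [Module R M] :
    Module.Finite R M ↔
      ∀ m : Ideal R, m.IsMaximal → ∃ s ∉ m, SFiniteWrt s M := by
  constructor
  · intro h m hm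
    exact ⟨1, m.one_notMem, ⊤, h.fg_top, fun _ => Submodule.mem_top⟩
  · intro h
    -- `sFiniteIdeal R M` lies in no maximal ideal, so it contains `1`, and `1 • M ⊆ F` gives
    -- `F = M`.
    have htop : sFiniteIdeal R M = ⊤ := by
      by_contra hne
      obtain ⟨m, hm, hle⟩ := Ideal.exists_le_maximal _ hne
      obtain ⟨s, hs, hsM⟩ := h m hm
      exact hs (hle hsM)
    obtain ⟨F, hF, h1⟩ : (1 : R) ∈ sFiniteIdeal R M := htop ▸ Submodule.mem_top
    have hFtop : F = ⊤ := by
      rw [Submodule.eq_top_iff']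
      intro x
      simpa using h1 x
    exact ⟨hFtop ▸ hF⟩
end

section
/- An R-module M is finitely presented if and only if for every maximal ideal m of R, M is u-(R∖m)-finitely presented. -/
/-!
The forward direction takes `F = M` and `s = 1`. Conversely, if `f : F → M` has kernel and cokernel
killed by `s`, then `f` becomes an isomorphism after inverting `s`, so `M[1/s]` is finitely
presented over `R[1/s]` (`UsFPWrt.finitePresentation_away`). The elements `s` with `UsFPWrt s M`
lie in no common maximal ideal, hence generate the unit ideal, and finite presentation is local
with respect to such a family (`Module.FinitePresentation.of_localizationSpan`).
-/

universe u

variable {R : Type u} [CommRing R]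

theorem UsFPWrt.finitePresentation_away {s : R} {M : Type u} [AddCommGroup M] [Module R M]
    (h : UsFPWrt s M) :
    Module.FinitePresentation (Localization.Away s) (LocalizedModule.Away s M) := by
  obtain ⟨F, _, _, f, hF, hker, hrange⟩ := h
  let S := Submonoid.powers s
  let s' : S := ⟨s, Submonoid.mem_powers s⟩
  have hinj : Function.Injective (LocalizedModule.map S f) := by
    rw [← LinearMap.ker_eq_bot, LinearMap.ker_eq_bot']
    intro x hx
    induction x with
    | _ x t =>
      rw [LocalizedModule.map_mk, ← LocalizedModule.zero_mk (1 : S), LocalizedModule.mk_eq] at hx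
      obtain ⟨v, hv⟩ := hx
      rw [← LocalizedModule.zero_mk (1 : S), LocalizedModule.mk_eq]
      have hvx : v.1 • x ∈ LinearMap.ker f := by
        simpa [Submonoid.smul_def] using hv
      refine ⟨s' * v, ?_⟩
      simpa [Submonoid.smul_def, mul_smul, s'] using hker _ hvx
  have hsurj : Function.Surjective (LocalizedModule.map S f) := by
    intro y
    induction y with
    | _ y t =>
      obtain ⟨x, hx⟩ := hrange y
      refine ⟨LocalizedModule.mk x (s' * t), ?_⟩
      rw [LocalizedModule.map_mk, hx]
      exact LocalizedModule.mk_cancel_common_left s' t y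
  exact .of_equiv (LinearEquiv.ofBijective (LocalizedModule.map S f) ⟨hinj, hsurj⟩)

/-- An `R`-module `M` is finitely presented if and only if for every maximal ideal `m` of `R`,
`M` is `u`-`(R ∖ m)`-finitely presented. -/
theorem finitePresentation_iff_usFP_of_maximal (M : Type u) [AddCommGroup M] [Module R M] :
    Module.FinitePresentation R M ↔
      ∀ m : Ideal R, m.IsMaximal → ∃ s ∉ m, UsFPWrt s M := by
  constructor
  · intro h m hm
    exact ⟨1, fun h1 => hm.ne_top ((Ideal.eq_top_iff_one m).2 h1), M, _, _, LinearMap.id, h,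
      fun x hx => by simpa using hx, fun x => ⟨1 • x, by simp⟩⟩
  · intro h
    refine Module.FinitePresentation.of_localizationSpan {s : R | UsFPWrt s M} ?_
      fun g => g.2.finitePresentation_away
    by_contra hne
    obtain ⟨m, hm, hle⟩ := Ideal.exists_le_maximal _ hne
    obtain ⟨s, hs, hM⟩ := h m hm
    exact hs (hle (Ideal.subset_span hM))
end

section
/- Let 0 → M → N → L → 0 be a short exact sequence of R-modules with L u-S-coherent. Then M is u-S-coherent if and only if N is u-S-coherent. -/
/-!
The proof replaces uniform `S`-coherence by a condition on relation modules: every linear map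
`p : Rⁿ → M` has a kernel that is `S`-finite with respect to a fixed `s` (`KerFin s M`).
A presentation of `range p` up to `s`-torsion yields, by a Schanuel-type comparison with `p`,
that `ker p` is `S`-finite with respect to `s * s`; conversely, dividing `Rⁿ` by a finitely
generated approximation of `ker p` presents `range p` up to `s`-torsion. Hence `M` is
`u`-`S`-coherent iff `M` is `S`-finite and satisfies `KerFin`, up to changing `s` in `S`.

For `0 → M → N → L → 0` with `KerFin t L`, the relations of `p : Rⁿ → N` are obtained by first
approximating those of `g ∘ p` by the range of some `k : Rᵐ → Rⁿ`, and then approximating the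
relations of `p ∘ k`, which takes values in `M`. Conversely `KerFin` passes from `N` to the
submodule `M`, and if `Rⁿ → N` generates `N` up to `s`, then the relations of the composite
`Rⁿ → L` map to generators of `M` up to `t * s`.
-/

universe u

variable {R : Type u} [CommRing R]

/-- `M` is uniformly `S`-coherent with respect to `s`: `M` is `S`-finite with respect to `s`
and every finitely generated submodule of `M` is `u`-`S`-finitely presented with respect
to `s`. -/
def UsCoherentWrt (s : R) (M : Type u) [AddCommGroup M] [Module R M] : Prop :=
  SFiniteWrt s M ∧ ∀ N : Submodule R M, N.FG → UsFPWrt s ↥N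

/-- The kernel of every linear map from a finite free module to `M` is `S`-finite with respect
to the fixed element `s`. -/
def KerFin (s : R) (M : Type u) [AddCommGroup M] [Module R M] : Prop :=
  ∀ (n : ℕ) (p : (Fin n → R) →ₗ[R] M), ∃ K : Submodule R (Fin n → R), K.FG ∧
    K ≤ LinearMap.ker p ∧ ∀ x ∈ LinearMap.ker p, s • x ∈ K

section

variable {M N L : Type u} [AddCommGroup M] [Module R M] [AddCommGroup N] [Module R N]
  [AddCommGroup L] [Module R L]

/-- Schanuel-type comparison of `p` with the map `h : F → M` provided by `UsFPWrt s M`. One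
factor `s` is lost because only `s • p` lifts through `h`, another because `ker h` is only
killed by `s`. -/
lemma UsFPWrt.exists_fg_le_ker {s : R} (hM : UsFPWrt s M) {n : ℕ} (p : (Fin n → R) →ₗ[R] M)
    (hp : Function.Surjective p) : ∃ K : Submodule R (Fin n → R), K.FG ∧
      K ≤ LinearMap.ker p ∧ ∀ x ∈ LinearMap.ker p, (s * s) • x ∈ K := by
  obtain ⟨F, _, _, h, hF, hker, hran⟩ := hM
  obtain ⟨m, π, hπ⟩ := Module.Finite.exists_fin' R F
  have hπker : (LinearMap.ker π).FG := Module.FinitePresentation.fg_ker π hπ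
  obtain ⟨r, hr⟩ := Module.projective_lifting_property p (h ∘ₗ π) hp
  have hr' : ∀ y, p (r y) = h (π y) := fun y => LinearMap.congr_fun hr y
  obtain ⟨q, hq⟩ := Module.projective_lifting_property ((h ∘ₗ π).rangeRestrict)
    (LinearMap.codRestrict (LinearMap.range (h ∘ₗ π)) (s • p) (fun x => by
      obtain ⟨y, hy⟩ := hran (p x)
      obtain ⟨z, rfl⟩ := hπ y
      exact ⟨z, hy⟩)) (LinearMap.surjective_rangeRestrict _)
  have hq' : ∀ x, h (π (q x)) = s • p x := fun x =>
    congrArg Subtype.val (LinearMap.congr_fun hq x)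
  refine ⟨(LinearMap.ker π).map r ⊔ LinearMap.range (s • LinearMap.id - r ∘ₗ q),
    (hπker.map r).sup ?_, sup_le ?_ ?_, ?_⟩
  · rw [LinearMap.range_eq_map]
    exact Module.Finite.fg_top.map _
  · rintro _ ⟨y, hy, rfl⟩
    have hy' : π y = 0 := hy
    simp [hr', hy']
  · rintro _ ⟨x, rfl⟩
    simp [hr', hq']
  · intro x hx
    have hx' : p x = 0 := hx
    have h1 : s • q x ∈ LinearMap.ker π := by
      have : s • π (q x) = 0 := hker _ (by simp [hq', hx'])
      simpa using this
    have h2 : (s * s) • x = r (s • q x) +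
        (s • (LinearMap.id : (Fin n → R) →ₗ[R] (Fin n → R)) - r ∘ₗ q) (s • x) := by
      simp [mul_smul, smul_sub]
    rw [h2]
    exact Submodule.add_mem_sup (Submodule.mem_map_of_mem h1) ⟨_, rfl⟩

lemma UsCoherentWrt.kerFin {s : R} (hM : UsCoherentWrt s M) : KerFin (s * s) M := by
  intro n p
  have hfg : (LinearMap.range p).FG := by
    rw [LinearMap.range_eq_map]
    exact Module.Finite.fg_top.map _
  simpa using (hM.2 _ hfg).exists_fg_le_ker p.rangeRestrict p.surjective_rangeRestrict

lemma KerFin.usCoherentWrt {s : R} (hK : KerFin s M) (hM : SFiniteWrt s M) :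
    UsCoherentWrt s M := by
  refine ⟨hM, fun P hP => ?_⟩
  have : Module.Finite R P := Module.Finite.iff_fg.mpr hP
  obtain ⟨n, p, hp⟩ := Module.Finite.exists_fin' R P
  obtain ⟨K, hKfg, hKle, hKs⟩ := hK n (P.subtype ∘ₗ p)
  have hker : LinearMap.ker (P.subtype ∘ₗ p) = LinearMap.ker p :=
    LinearMap.ker_comp_of_ker_eq_bot _ P.ker_subtype
  rw [hker] at hKle hKs
  refine ⟨(Fin n → R) ⧸ K, inferInstance, inferInstance, K.liftQ p hKle, ?_, ?_, ?_⟩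
  · exact Module.finitePresentation_of_surjective K.mkQ K.mkQ_surjective (by simpa using hKfg)
  · intro x hx
    obtain ⟨y, rfl⟩ := K.mkQ_surjective x
    have hy : y ∈ LinearMap.ker p := by simpa using hx
    rw [← map_smul]
    exact (Submodule.Quotient.mk_eq_zero K).mpr (hKs y hy)
  · intro m
    obtain ⟨y, hy⟩ := hp (s • m)
    exact ⟨K.mkQ y, by simpa using hy⟩

lemma KerFin.mul_left {s : R} (hM : KerFin s M) (t : R) : KerFin (t * s) M := by
  intro n p
  obtain ⟨K, h1, h2, h3⟩ := hM n p
  exact ⟨K, h1, h2, fun x hx => by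
    rw [mul_smul]
    exact K.smul_mem t (h3 x hx)⟩

lemma SFiniteWrt.mul_left {s : R} (hM : SFiniteWrt s M) (t : R) : SFiniteWrt (t * s) M := by
  obtain ⟨F, h1, h2⟩ := hM
  exact ⟨F, h1, fun x => by
    rw [mul_smul]
    exact F.smul_mem t (h2 x)⟩

lemma KerFin.of_injective {s : R} (hN : KerFin s N) (f : M →ₗ[R] N)
    (hf : Function.Injective f) : KerFin s M := by
  intro n p
  have := hN n (f ∘ₗ p)
  rwa [LinearMap.ker_comp_of_ker_eq_bot _ (LinearMap.ker_eq_bot.mpr hf)] at this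

lemma KerFin.extension {s t : R} (hM : KerFin s M) (hL : KerFin t L) (f : M →ₗ[R] N)
    (g : N →ₗ[R] L) (hf : Function.Injective f)
    (hfg : LinearMap.ker g = LinearMap.range f) : KerFin (s * t) N := by
  intro n p
  obtain ⟨K, hKfg, hKle, hKt⟩ := hL n (g ∘ₗ p)
  obtain ⟨m, k, rfl⟩ := (Submodule.fg_iff_exists_fin_linearMap _ _).mp hKfg
  -- `p ∘ k` takes values in `ker g = range f`, so it factors through `M`.
  obtain ⟨φ, hφ⟩ := Module.projective_lifting_property f.rangeRestrict
    (LinearMap.codRestrict (LinearMap.range f) (p ∘ₗ k) (fun y => by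
      rw [← hfg]
      exact hKle ⟨y, rfl⟩)) f.surjective_rangeRestrict
  have hφ' : ∀ y, f (φ y) = p (k y) := fun y => congrArg Subtype.val (LinearMap.congr_fun hφ y)
  obtain ⟨K', hfg', hle', hs'⟩ := hM m φ
  refine ⟨K'.map k, hfg'.map k, ?_, ?_⟩
  · rintro _ ⟨y, hy, rfl⟩
    have hy' : φ y = 0 := hle' hy
    simp [← hφ', hy']
  · intro x hx
    have hx' : p x = 0 := hx
    obtain ⟨y, hy⟩ := hKt x (by simp [hx'])
    have hy' : y ∈ LinearMap.ker φ := hf (by simp [hφ', hy, hx'])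
    exact ⟨s • y, hs' y hy', by simp [hy, mul_smul]⟩

lemma SFiniteWrt.extension {s t : R} (hM : SFiniteWrt s M) (hL : SFiniteWrt t L) (f : M →ₗ[R] N)
    (g : N →ₗ[R] L) (hg : Function.Surjective g)
    (hfg : LinearMap.ker g = LinearMap.range f) : SFiniteWrt (s * t) N := by
  obtain ⟨A, hAfg, hA⟩ := hM
  obtain ⟨B, hBfg, hB⟩ := hL
  obtain ⟨n, b, rfl⟩ := (Submodule.fg_iff_exists_fin_linearMap _ _).mp hBfg
  obtain ⟨c, hc⟩ := Module.projective_lifting_property g b hg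
  have hc' : ∀ y, g (c y) = b y := fun y => LinearMap.congr_fun hc y
  refine ⟨LinearMap.range c ⊔ A.map f, Submodule.FG.sup ?_ (hAfg.map f), fun x => ?_⟩
  · rw [LinearMap.range_eq_map]
    exact Module.Finite.fg_top.map _
  · obtain ⟨y, hy⟩ := hB (g x)
    have hmem : t • x - c y ∈ LinearMap.ker g := by simp [hc', hy]
    rw [hfg] at hmem
    obtain ⟨m, hm⟩ := hmem
    have h2 : (s * t) • x = c (s • y) + f (s • m) := by
      simp [hm, mul_smul, smul_sub]
    rw [h2]
    exact Submodule.add_mem_sup ⟨_, rfl⟩ (Submodule.mem_map_of_mem (hA m))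

lemma SFiniteWrt.of_extension {s t : R} (hN : SFiniteWrt s N) (hL : KerFin t L) (f : M →ₗ[R] N)
    (g : N →ₗ[R] L) (hf : Function.Injective f)
    (hfg : LinearMap.ker g = LinearMap.range f) : SFiniteWrt (t * s) M := by
  obtain ⟨A, hAfg, hA⟩ := hN
  obtain ⟨n, q, rfl⟩ := (Submodule.fg_iff_exists_fin_linearMap _ _).mp hAfg
  obtain ⟨K, hKfg, hKle, hKt⟩ := hL n (g ∘ₗ q)
  have hle : K.map q ≤ LinearMap.range f := by
    rw [← hfg]
    rintro _ ⟨y, hy, rfl⟩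
    exact hKle hy
  refine ⟨(K.map q).comap f, Submodule.fg_of_fg_map_injective f hf ?_, fun m => ?_⟩
  · rw [Submodule.map_comap_eq_of_le hle]
    exact hKfg.map q
  · obtain ⟨y, hy⟩ := hA (f m)
    have hgf : g (f m) = 0 := by
      have : f m ∈ LinearMap.ker g := hfg ▸ ⟨m, rfl⟩
      exact this
    exact ⟨t • y, hKt y (by simp [hy, hgf]), by simp [hy, mul_smul]⟩

end

/-- Let `0 → M → N → L → 0` be a short exact sequence of `R`-modules with `L`
`u`-`S`-coherent.  Then `M` is `u`-`S`-coherent if and only if `N` is `u`-`S`-coherent. -/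
theorem usCoherent_iff_of_shortExact (S : Submonoid R)
    {M N L : Type u} [AddCommGroup M] [Module R M] [AddCommGroup N] [Module R N]
    [AddCommGroup L] [Module R L]
    (f : M →ₗ[R] N) (g : N →ₗ[R] L)
    (hf : Function.Injective f) (hg : Function.Surjective g)
    (hfg : LinearMap.ker g = LinearMap.range f)
    (hL : ∃ s ∈ S, UsCoherentWrt s L) :
    (∃ s ∈ S, UsCoherentWrt s M) ↔ (∃ s ∈ S, UsCoherentWrt s N) := by
  obtain ⟨t, htS, ht⟩ := hL
  have htK := ht.kerFin
  constructor
  · rintro ⟨s, hsS, hs⟩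
    have hK := hs.kerFin.extension htK f g hf hfg
    have hF := hs.1.extension ht.1 f g hg hfg
    -- `(s * t) * ((s * s) * (t * t))` is a common multiple of the two elements of `S` obtained.
    refine ⟨(s * t) * ((s * s) * (t * t)), ?_, (hK.mul_left (s * t)).usCoherentWrt ?_⟩
    · exact S.mul_mem (S.mul_mem hsS htS)
        (S.mul_mem (S.mul_mem hsS hsS) (S.mul_mem htS htS))
    · rw [mul_comm]
      exact hF.mul_left _
  · rintro ⟨s, hsS, hs⟩
    have hK := hs.kerFin.of_injective f hf
    have hF := hs.1.of_extension htK f g hf hfg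
    refine ⟨(t * t * s) * (s * s), ?_, (hK.mul_left (t * t * s)).usCoherentWrt ?_⟩
    · exact S.mul_mem (S.mul_mem (S.mul_mem htS htS) hsS) (S.mul_mem hsS hsS)
    · rw [mul_comm]
      exact hF.mul_left _
end

section
/- Let 0 → M → N → L → 0 be a short exact sequence of R-modules. If N is u-S-coherent and M is S-finite, then L is u-S-coherent. -/
/-!
Let `N` be coherent with respect to `s` and let `t` witness the `S`-finiteness of `M`, so that
`t • ker g ⊆ K ⊆ ker g` for a finitely generated `K`. The element `s * s * t` works for `L`.

`S`-finiteness passes to the image. Given a finitely generated `P ≤ L`, it is the image of a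
finitely generated `Q ≤ N`, which may be enlarged to contain `K` without changing its image. Take
`φ : F → Q` with `F` finitely presented and kernel and cokernel killed by `s`. Since
`s • Q ⊆ range φ`, there is a finitely generated `X ≤ F` with `φ(X) = s • K`
(`exists_fg_map_eq`). Then `F ⧸ X` is finitely presented and maps to `P` with cokernel killed by
`s`. If `x : F` maps to `0` in `P`, then `t • φ x ∈ K`, so `(s * t) • φ x = φ x'` with `x' ∈ X`,
and hence `s • ((s * t) • x - x') = 0`; that is, `(s * s * t) • x ∈ X`.
-/

universe u

variable {R : Type u} [CommRing R]

/-- A finitely generated submodule of the range of `f` is the image of a finitely generated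
submodule of the source. -/
lemma exists_fg_map_eq {A B : Type*} [AddCommGroup A] [Module R A] [AddCommGroup B] [Module R B]
    (f : A →ₗ[R] B) {P : Submodule R B} (hP : P.FG) (hle : P ≤ LinearMap.range f) :
    ∃ Q : Submodule R A, Q.FG ∧ Q.map f = P := by
  classical
  obtain ⟨T, rfl⟩ := hP
  have hT : (T : Set B) ⊆ f '' Set.univ := fun b hb => by
    obtain ⟨a, ha⟩ := hle (Submodule.subset_span hb)
    exact ⟨a, trivial, ha⟩
  obtain ⟨T', -, rfl⟩ := Finset.subset_set_image_iff.1 hT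
  exact ⟨Submodule.span R T', ⟨T', rfl⟩, by rw [Submodule.map_span, Finset.coe_image]⟩

/-- `S`-finiteness passes along a surjection, with respect to any multiple of the witness. -/
lemma SFiniteWrt.of_surjective {N L : Type u} [AddCommGroup N] [Module R N] [AddCommGroup L]
    [Module R L] {g : N →ₗ[R] L} (hg : Function.Surjective g) {s : R} (h : SFiniteWrt s N)
    (r : R) : SFiniteWrt (r * s) L := by
  obtain ⟨F, hF, hs⟩ := h
  refine ⟨F.map g, hF.map g, fun l => ?_⟩
  obtain ⟨n, rfl⟩ := hg l
  rw [mul_smul, ← map_smul]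
  exact Submodule.smul_mem _ _ (Submodule.mem_map_of_mem (hs n))

/-- The quotient of a uniformly `S`-finitely presented module `Q` by the kernel of a surjection
`g : Q → P` is again uniformly `S`-finitely presented if that kernel is `S`-finite, as witnessed
by `K`. -/
lemma UsFPWrt.of_surjective {Q P : Type u} [AddCommGroup Q] [Module R Q] [AddCommGroup P]
    [Module R P] {g : Q →ₗ[R] P} (hg : Function.Surjective g) {s t : R} (h : UsFPWrt s Q)
    {K : Submodule R Q} (hK : K.FG) (hKg : K ≤ LinearMap.ker g)
    (ht : ∀ x ∈ LinearMap.ker g, t • x ∈ K) : UsFPWrt (s * s * t) P := by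
  obtain ⟨F, _, _, φ, hF, hker, hran⟩ := h
  obtain ⟨X, hX, hXK⟩ := exists_fg_map_eq φ (hK.map (LinearMap.lsmul R Q s)) (by
    rintro _ ⟨k, -, rfl⟩
    exact hran k)
  have hXg : X ≤ LinearMap.ker (g ∘ₗ φ) := by
    intro x hx
    have : φ x ∈ K.map (LinearMap.lsmul R Q s) := hXK ▸ Submodule.mem_map_of_mem hx
    obtain ⟨k, hk, hkx⟩ := this
    have hgk : g k = 0 := hKg hk
    simp [← hkx, hgk]
  refine ⟨F ⧸ X, inferInstance, inferInstance, X.liftQ (g ∘ₗ φ) hXg, ?_, ?_, ?_⟩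
  · exact Module.finitePresentation_of_surjective X.mkQ X.mkQ_surjective (by simpa using hX)
  · intro y hy
    obtain ⟨x, rfl⟩ := X.mkQ_surjective y
    have hx : φ x ∈ LinearMap.ker g := by simpa using hy
    have hm : s • t • φ x ∈ X.map φ := hXK ▸ ⟨t • φ x, ht _ hx, rfl⟩
    obtain ⟨x', hx', he⟩ := hm
    have h0 : s • (s • t • x - x') = 0 := hker _ (by simp [he])
    rw [smul_sub, sub_eq_zero, smul_smul, smul_smul] at h0
    rw [← map_smul, h0, Submodule.mkQ_apply, Submodule.Quotient.mk_eq_zero]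
    exact X.smul_mem _ hx'
  · intro p
    obtain ⟨q, rfl⟩ := hg p
    obtain ⟨x, hx⟩ := hran q
    refine ⟨X.mkQ ((s * t) • x), ?_⟩
    simp only [Submodule.mkQ_apply, Submodule.liftQ_apply, LinearMap.comp_apply, map_smul, hx,
      smul_smul]
    congr 1
    ring

/-- Let `0 → M → N → L → 0` be a short exact sequence of `R`-modules.  If `N` is
`u`-`S`-coherent and `M` is `S`-finite, then `L` is `u`-`S`-coherent. -/
theorem usCoherent_of_shortExact (S : Submonoid R)
    {M N L : Type u} [AddCommGroup M] [Module R M] [AddCommGroup N] [Module R N]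
    [AddCommGroup L] [Module R L]
    (f : M →ₗ[R] N) (g : N →ₗ[R] L)
    (hf : Function.Injective f) (hg : Function.Surjective g)
    (hfg : LinearMap.ker g = LinearMap.range f)
    (hN : ∃ s ∈ S, UsCoherentWrt s N) (hM : ∃ s ∈ S, SFiniteWrt s M) :
    ∃ s ∈ S, UsCoherentWrt s L := by
  obtain ⟨s, hs, hfin, hcoh⟩ := hN
  obtain ⟨t, ht, K, hK, htK⟩ := hM
  refine ⟨s * s * t, S.mul_mem (S.mul_mem hs hs) ht, ?_, fun P hP => ?_⟩
  · have := hfin.of_surjective hg (s * t)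
    rwa [mul_right_comm] at this
  obtain ⟨Q₀, hQ₀, hQ₀P⟩ := exists_fg_map_eq g hP (by simp [LinearMap.range_eq_top.2 hg])
  have hKg : K.map f ≤ LinearMap.ker g := hfg ▸ LinearMap.map_le_range
  have hQP : (Q₀ ⊔ K.map f).map g = P := by
    rw [Submodule.map_sup, hQ₀P, LinearMap.le_ker_iff_map.1 hKg, sup_bot_eq]
  have hQ : (Q₀ ⊔ K.map f).FG := hQ₀.sup (hK.map f)
  have hKQ : K.map f ≤ Q₀ ⊔ K.map f := le_sup_right
  generalize Q₀ ⊔ K.map f = Q at hQP hQ hKQ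
  subst hQP
  -- The finitely generated part `K.map f` of the kernel, viewed inside `Q`.
  refine (hcoh Q hQ).of_surjective (g := g.submoduleMap Q) (g.submoduleMap_surjective Q)
    (K := (K.map f).comap Q.subtype) ?_ ?_ ?_
  · refine Submodule.fg_of_fg_map_injective Q.subtype Q.injective_subtype ?_
    rw [Submodule.map_comap_subtype, inf_eq_right.2 hKQ]
    exact hK.map f
  · intro x hx
    exact Subtype.ext (hKg hx)
  · intro x hx
    have hx' : (x : N) ∈ LinearMap.ker g := congrArg Subtype.val hx
    rw [hfg] at hx'
    obtain ⟨m, hm⟩ := hx'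
    exact ⟨t • m, htK m, by simp [hm]⟩
end

section
/- Let S be a multiplicative subset of R consisting of finitely many elements. Then the following are equivalent: (1) R is a u-S-coherent ring; (2) R is an S-coherent ring; (3) R is a c-S-coherent ring. -/
/-!
Since `S` is finite, some power `e` of the product of all elements of `S` is idempotent; it lies
in `S` and is a multiple of every element of `S`. Hence in each of the three conditions the
element `s ∈ S` may be replaced by `e`, and each condition turns out to be equivalent to:

  for every finitely generated ideal `I`, the ideal `e I` is finitely presented.

`finitePresentation_scaledIdeal` derives this from each of the conditions: if `f : P → I` has `P`
finitely presented, cokernel killed by `e` and kernel carried by `e` into a finitely generated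
`K ≤ ker f`, then `x ↦ e f(x)` maps `P` onto `e I` with kernel `K + (1 - e) P`. Conversely, the
inclusion `e I ⊆ I` witnesses u-`S`- and c-`S`-coherence, and if `f : Rⁿ → I` is surjective then
the finitely generated module `e • ker (e f)` witnesses that `ker f` is `S`-finite.
-/

universe u

variable {R : Type u} [CommRing R]

/-- `R` is a `u`-`S`-coherent ring: there is `s ∈ S` such that every finitely generated ideal
of `R` is `u`-`S`-finitely presented with respect to `s`. -/
def UsCoherentRing (S : Submonoid R) : Prop :=
  ∃ s ∈ S, ∀ I : Ideal R, I.FG → UsFPWrt s ↥I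

/-- `R` is an `S`-coherent ring: every finitely generated ideal `I` admits an exact sequence
`0 → K → F → I → 0` with `F` finitely generated free and `K` `S`-finite. -/
def SCoherentRing (S : Submonoid R) : Prop :=
  ∀ I : Ideal R, I.FG → ∃ (n : ℕ) (f : (Fin n → R) →ₗ[R] ↥I), Function.Surjective f ∧
    ∃ s ∈ S, ∃ K : Submodule R (Fin n → R), K.FG ∧ K ≤ LinearMap.ker f ∧
      ∀ x ∈ LinearMap.ker f, s • x ∈ K

/-- `R` is a `c`-`S`-coherent ring: every finitely generated ideal `I` contains a finitely
presented sub-ideal `N` with `s • I ⊆ N` for some `s ∈ S`. -/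
def CSCoherentRing (S : Submonoid R) : Prop :=
  ∀ I : Ideal R, I.FG → ∃ N : Ideal R, N ≤ I ∧ Module.FinitePresentation R ↥N ∧
    ∃ s ∈ S, ∀ x ∈ I, s * x ∈ N

/-- A finite submonoid of a commutative ring contains an idempotent divisible by all of its
elements. -/
lemma exists_idempotent_dvd (S : Submonoid R) (hS : (S : Set R).Finite) :
    ∃ e ∈ S, e * e = e ∧ ∀ s ∈ S, s ∣ e := by
  classical
  set p : R := ∏ s ∈ hS.toFinset, s with hp
  have hpS : p ∈ S := S.prod_mem fun s hs => by simpa using hs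
  have hdvd : ∀ s ∈ S, s ∣ p := fun s hs => Finset.dvd_prod_of_mem _ (by simpa using hs)
  -- Two positive powers of `p` coincide, say `p ^ (a + 1) = p ^ (a + 1 + d)` with `d > 0`.
  obtain ⟨a, d, hd, had⟩ : ∃ a d : ℕ, 0 < d ∧ p ^ (a + 1) = p ^ (a + 1 + d) := by
    obtain ⟨m, -, n, -, hmn, h⟩ := Set.infinite_univ.exists_lt_map_eq_of_mapsTo
      (f := fun k : ℕ => p ^ (k + 1)) (t := (S : Set R)) (fun k _ => S.pow_mem hpS _) hS
    refine ⟨m, n - m, by omega, ?_⟩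
    rw [show m + 1 + (n - m) = n + 1 by omega]
    exact h
  have key : ∀ k j : ℕ, p ^ (a + 1 + j) = p ^ (a + 1 + j + d * k) := by
    intro k j
    induction k with
    | zero => simp
    | succ k ih =>
      rw [ih, show a + 1 + j + d * (k + 1) = (a + 1 + d) + (j + d * k) by ring,
        pow_add p (a + 1 + d), ← had, ← pow_add]
      congr 1
      ring
  -- The exponent `d (a + 1)` is a multiple of the period `d` and is at least `a + 1`.
  have hle : a + 1 ≤ d * (a + 1) := Nat.le_mul_of_pos_left _ hd
  refine ⟨p ^ (d * (a + 1)), S.pow_mem hpS _, ?_, fun s hs =>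
    (hdvd s hs).trans (dvd_pow_self p (by omega))⟩
  have h := key (a + 1) (d * (a + 1) - (a + 1))
  rw [show a + 1 + (d * (a + 1) - (a + 1)) = d * (a + 1) by omega] at h
  rw [← pow_add, ← h]

/-- The ideal `e I = {e x | x ∈ I}`. -/
abbrev scaledIdeal (e : R) (I : Ideal R) : Ideal R :=
  Submodule.map (LinearMap.lsmul R R e) I

/-- Multiplication by `e`, as a linear map `I → e I`. -/
def toScaledIdeal (e : R) (I : Ideal R) : ↥I →ₗ[R] ↥(scaledIdeal e I) :=
  ((LinearMap.lsmul R R e).comp I.subtype).codRestrict _ fun x => ⟨x, x.2, rfl⟩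

lemma toScaledIdeal_surjective (e : R) (I : Ideal R) :
    Function.Surjective (toScaledIdeal e I) := by
  rintro ⟨_, x, hx, rfl⟩
  exact ⟨⟨x, hx⟩, rfl⟩

lemma toScaledIdeal_eq_zero_iff (e : R) (I : Ideal R) (x : I) :
    toScaledIdeal e I x = 0 ↔ e • x = 0 := by
  rw [Subtype.ext_iff, Subtype.ext_iff]
  rfl

lemma toScaledIdeal_smul {e : R} (he : e * e = e) (I : Ideal R) (x : I) :
    toScaledIdeal e I (e • x) = toScaledIdeal e I x := by
  rw [Subtype.ext_iff]
  change e * (e * (x : R)) = e * x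
  rw [← mul_assoc, he]

lemma scaledIdeal_le (e : R) (I : Ideal R) : scaledIdeal e I ≤ I := by
  rintro _ ⟨x, hx, rfl⟩
  exact I.mul_mem_left e hx

/-- An approximate presentation `P → I` of `I`, up to the idempotent `e`, makes `e I` finitely
presented: `e I` is the quotient of `P` by `K + (1 - e) P`. -/
lemma finitePresentation_scaledIdeal {e : R} (he : e * e = e) (I : Ideal R)
    {P : Type u} [AddCommGroup P] [Module R P] (hP : Module.FinitePresentation R P)
    (f : P →ₗ[R] ↥I) (K : Submodule R P) (hK : K.FG) (hKf : K ≤ LinearMap.ker f)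
    (hker : ∀ x ∈ LinearMap.ker f, e • x ∈ K) (hrange : ∀ m : I, e • m ∈ LinearMap.range f) :
    Module.FinitePresentation R ↥(scaledIdeal e I) := by
  let g : P →ₗ[R] ↥(scaledIdeal e I) := (toScaledIdeal e I).comp f
  have hg : ∀ x, g x = 0 ↔ e • f x = 0 := fun x => toScaledIdeal_eq_zero_iff e I (f x)
  have hsurj : Function.Surjective g := by
    intro y
    obtain ⟨m, rfl⟩ := toScaledIdeal_surjective e I y
    obtain ⟨x, hx⟩ := hrange m
    refine ⟨x, ?_⟩
    change toScaledIdeal e I (f x) = _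
    rw [hx, toScaledIdeal_smul he]
  have hkerg : LinearMap.ker g = K ⊔ LinearMap.range (LinearMap.lsmul R P (1 - e)) := by
    apply le_antisymm
    · intro x hx
      have h1 : e • x ∈ K := by
        have h2 : e • x ∈ LinearMap.ker f := by
          rw [LinearMap.mem_ker, map_smul]
          exact (hg x).1 hx
        simpa [smul_smul, he] using hker _ h2
      rw [show x = e • x + (1 - e) • x by rw [← add_smul]; simp]
      exact Submodule.add_mem_sup h1 ⟨x, rfl⟩
    · refine sup_le (fun x hx => ?_) ?_
      · rw [LinearMap.mem_ker, hg, LinearMap.mem_ker.1 (hKf hx), smul_zero]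
      · rintro _ ⟨x, rfl⟩
        rw [LinearMap.mem_ker, hg, LinearMap.lsmul_apply, map_smul, smul_smul, mul_sub, he]
        simp
  refine Module.finitePresentation_of_surjective g hsurj ?_
  rw [hkerg]
  refine hK.sup ?_
  rw [LinearMap.range_eq_map]
  exact Module.Finite.fg_top.map _

/-- Let `S` be a multiplicative subset of `R` consisting of finitely many elements.  Then the
following are equivalent: (1) `R` is a `u`-`S`-coherent ring; (2) `R` is an `S`-coherent
ring; (3) `R` is a `c`-`S`-coherent ring. -/
theorem usCoherent_iff_sCoherent_iff_cSCoherent (S : Submonoid R)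
    (hS : (S : Set R).Finite) :
    [UsCoherentRing S, SCoherentRing S, CSCoherentRing S].TFAE := by
  obtain ⟨e, heS, he, hdvd⟩ := exists_idempotent_dvd S hS
  have h1 : UsCoherentRing S ↔
      ∀ I : Ideal R, I.FG → Module.FinitePresentation R ↥(scaledIdeal e I) := by
    constructor
    · rintro ⟨s, hs, h⟩ I hI
      obtain ⟨c, hc⟩ := hdvd s hs
      obtain ⟨F, _, _, f, hF, hk, hr⟩ := h I hI
      refine finitePresentation_scaledIdeal he I hF f ⊥ Submodule.fg_bot bot_le ?_ ?_
      · intro x hx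
        rw [hc, mul_comm, mul_smul, hk x hx, smul_zero]
        exact Submodule.zero_mem _
      · intro m
        rw [hc, mul_comm, mul_smul]
        exact Submodule.smul_mem _ _ (hr m)
    · intro h
      refine ⟨e, heS, fun I hI => ⟨↥(scaledIdeal e I), inferInstance, inferInstance,
        Submodule.inclusion (scaledIdeal_le e I), h I hI, ?_, ?_⟩⟩
      · intro x hx
        rw [Submodule.ker_inclusion, Submodule.mem_bot] at hx
        rw [hx, smul_zero]
      · intro m
        exact ⟨toScaledIdeal e I m, rfl⟩
  have h2 : SCoherentRing S ↔
      ∀ I : Ideal R, I.FG → Module.FinitePresentation R ↥(scaledIdeal e I) := by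
    constructor
    · intro h I hI
      obtain ⟨n, f, hf, s, hs, K, hK, hKf, hk⟩ := h I hI
      obtain ⟨c, hc⟩ := hdvd s hs
      refine finitePresentation_scaledIdeal he I inferInstance f K hK hKf ?_ ?_
      · intro x hx
        rw [hc, mul_comm, mul_smul]
        exact K.smul_mem _ (hk x hx)
      · intro m
        exact hf _
    · intro h I hI
      have := h I hI
      have hfin : Module.Finite R I := Module.Finite.iff_fg.2 hI
      obtain ⟨n, f, hf⟩ := Module.Finite.exists_fin' R I
      have hfg := Module.FinitePresentation.fg_ker ((toScaledIdeal e I).comp f)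
        ((toScaledIdeal_surjective e I).comp hf)
      refine ⟨n, f, hf, e, heS, _, hfg.map (LinearMap.lsmul R (Fin n → R) e), ?_, ?_⟩
      · rintro _ ⟨x, hx, rfl⟩
        rw [LinearMap.mem_ker, LinearMap.lsmul_apply, map_smul]
        exact (toScaledIdeal_eq_zero_iff e I (f x)).1 hx
      · intro x hx
        refine ⟨x, ?_, rfl⟩
        change toScaledIdeal e I (f x) = 0
        rw [LinearMap.mem_ker.1 hx, map_zero]
  have h3 : CSCoherentRing S ↔
      ∀ I : Ideal R, I.FG → Module.FinitePresentation R ↥(scaledIdeal e I) := by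
    constructor
    · intro h I hI
      obtain ⟨N, hN, hNfp, s, hs, hsN⟩ := h I hI
      obtain ⟨c, hc⟩ := hdvd s hs
      refine finitePresentation_scaledIdeal he I hNfp (Submodule.inclusion hN) ⊥
        Submodule.fg_bot bot_le ?_ ?_
      · intro x hx
        rw [Submodule.ker_inclusion] at hx
        exact Submodule.smul_mem _ _ hx
      · intro m
        rw [hc, mul_comm, mul_smul]
        exact Submodule.smul_mem _ _ ⟨⟨s * m, hsN m m.2⟩, rfl⟩
    · intro h I hI
      exact ⟨scaledIdeal e I, scaledIdeal_le e I, h I hI, e, heS, fun x hx => ⟨x, hx, rfl⟩⟩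
  tfae_have 1 ↔ 2 := h1.trans h2.symm
  tfae_have 2 ↔ 3 := h2.trans h3.symm
  tfae_finish
end

section
/- For an R-module F, the following are equivalent: (1) there exists s ∈ S such that s•Tor₁^R(M,F) = 0 for every R-module M (i.e., F is u-S-flat); (2) there exists s ∈ S such that s•Tor₁^R(N,F) = 0 for every finitely presented R-module N; (3) for every injective R-module E there exists s ∈ S such that s•Ext¹_R(M, Hom_R(F,E)) = 0 for every R-module M (i.e., Hom_R(F,E) is u-S-injective). -/
/-!
All three conditions are compared, with the same `s`, to a condition on tensor products. Let `Q` be a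
projective resolution of `M` and `L ⊆ Q₀` its first syzygy, so that `0 → L → Q₀ → M → 0` is exact.

* The snake lemma identifies `Tor₁(M, F)`, computed from a resolution of `F`, with the kernel of
  `L ⊗ F → Q₀ ⊗ F` (`smul_ker_of_smul_tor`, `smul_tor_of_smul_ker`).
* `s • Ext¹(M, Hom(F, E)) = 0` means that `s` times any map `L ⊗ F → E` extends to `Q₀ ⊗ F`. For
  injective `E` this holds as soon as `s` kills that kernel (`extend_of_smul_ker`), and for
  the injective cogenerator `E = CharacterModule R` it forces `s` to kill it
  (`smul_ker_of_extend`). A single `E` thus yields one `s` valid for all `M`.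
* Passing from finitely presented modules to all modules uses that each 1-cycle of `M ⊗ P`, with
  `P` a projective resolution of `F`, comes from a 1-cycle of `N ⊗ P` for some finitely presented
  `N → M`; this is the equational criterion for vanishing in a tensor product
  (`smul_tor_of_finitePresentation`).
-/

universe u

open CategoryTheory

variable {R : Type u} [CommRing R]

section Auxiliary

open TensorProduct

theorem smul_iff_of_iso {X Y : ModuleCat.{u} R} (e : X ≅ Y) (s : R) :
    (∀ x : X, s • x = 0) ↔ ∀ y : Y, s • y = 0 := by
  have e := e.toLinearEquiv
  constructor
  · intro h x
    obtain ⟨y, rfl⟩ := e.surjective x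
    rw [← map_smul, h, map_zero]
  · intro h x
    apply e.injective
    rw [map_smul, h, map_zero]

theorem smul_homology_iff (T : ShortComplex (ModuleCat.{u} R)) (s : R) :
    (∀ x : T.homology, s • x = 0) ↔ ∀ x : T.X₂, T.g x = 0 → ∃ y : T.X₁, T.f y = s • x := by
  refine (smul_iff_of_iso T.moduleCatHomologyIso s).trans ?_
  change (∀ x : (LinearMap.ker T.g.hom ⧸ LinearMap.range T.moduleCatToCycles), s • x = 0) ↔ _
  constructor
  · intro h x hx
    have := h (Submodule.Quotient.mk ⟨x, hx⟩)
    rw [← Submodule.Quotient.mk_smul, Submodule.Quotient.mk_eq_zero] at this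
    obtain ⟨y, hy⟩ := this
    exact ⟨y, congrArg Subtype.val hy⟩
  · intro h x
    obtain ⟨⟨x, hx⟩, rfl⟩ := Submodule.Quotient.mk_surjective _ x
    obtain ⟨y, hy⟩ := h x hx
    rw [← Submodule.Quotient.mk_smul, Submodule.Quotient.mk_eq_zero]
    exact ⟨y, Subtype.ext hy⟩

/-- `s • Tor₁(M, F) = 0`, read off from a projective resolution `P` of `F`: multiplication by `s`
sends every 1-cycle of `M ⊗ P` to a boundary. -/
theorem smul_tor_iff {F : Type u} [AddCommGroup F] [Module R F]
    (P : ProjectiveResolution (ModuleCat.of R F)) (M : Type u) [AddCommGroup M] [Module R M]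
    (s : R) :
    (∀ x : ((Tor (ModuleCat.{u} R) 1).obj (ModuleCat.of R M)).obj (ModuleCat.of R F),
      s • x = 0) ↔
    ∀ x : M ⊗[R] (P.complex.X 1), (P.complex.d 1 0).hom.lTensor M x = 0 →
      ∃ y : M ⊗[R] (P.complex.X 2), (P.complex.d 2 1).hom.lTensor M y = s • x := by
  refine (smul_iff_of_iso (P.isoLeftDerivedObj
    ((MonoidalCategory.tensoringLeft (ModuleCat.{u} R)).obj (ModuleCat.of R M)) 1) s).trans ?_
  let K := (((MonoidalCategory.tensoringLeft (ModuleCat.{u} R)).obj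
    (ModuleCat.of R M)).mapHomologicalComplex (ComplexShape.down ℕ)).obj P.complex
  refine (smul_iff_of_iso (K.homologyIsoSc' 2 1 0 (by simp) (by simp)) s).trans
    ((smul_homology_iff _ s).trans ?_)
  rfl

/-- `s • Ext¹(M, N) = 0`, read off from a projective resolution `Q` of `M`: multiplication by `s`
sends every 1-cocycle of `Hom(Q, N)` to a coboundary. -/
theorem smul_ext_iff {M : Type u} [AddCommGroup M] [Module R M]
    (Q : ProjectiveResolution (ModuleCat.of R M)) (N : Type u) [AddCommGroup N] [Module R N]
    (s : R) :
    (∀ x : ((Ext R (ModuleCat.{u} R) 1).obj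
        (Opposite.op (ModuleCat.of R M))).obj (ModuleCat.of R N), s • x = 0) ↔
    ∀ f : Q.complex.X 1 →ₗ[R] N, f ∘ₗ (Q.complex.d 2 1).hom = 0 →
      ∃ g : Q.complex.X 0 →ₗ[R] N, g ∘ₗ (Q.complex.d 1 0).hom = s • f := by
  rw [smul_iff_of_iso (Q.isoExt (R := R) 1 (ModuleCat.of R N)) s]
  let K := Q.complex.linearYonedaObj R (ModuleCat.of R N)
  refine (smul_iff_of_iso (K.homologyIsoSc' 0 1 2 (by simp) (by simp)) s).trans
    ((smul_homology_iff _ s).trans ?_)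
  constructor
  · intro h f hf
    obtain ⟨g, hg⟩ := h (ModuleCat.ofHom f) (ModuleCat.hom_ext hf)
    exact ⟨g.hom, congrArg ModuleCat.Hom.hom hg⟩
  · intro h f hf
    obtain ⟨g, hg⟩ := h f.hom (congrArg ModuleCat.Hom.hom hf)
    exact ⟨ModuleCat.ofHom g, ModuleCat.hom_ext hg⟩

theorem flat_res {M : Type u} [AddCommGroup M] [Module R M]
    (P : ProjectiveResolution (ModuleCat.of R M)) (n : ℕ) : Module.Flat R (P.complex.X n) := by
  have := (IsProjective.iff_projective (R := R) (P.complex.X n)).2 (P.projective n)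
  infer_instance

theorem exact_res {M : Type u} [AddCommGroup M] [Module R M]
    (P : ProjectiveResolution (ModuleCat.of R M)) :
    Function.Exact (P.complex.d 2 1).hom (P.complex.d 1 0).hom :=
  (ShortComplex.ShortExact.moduleCat_exact_iff_function_exact _).1 (P.exact_succ 0)

theorem exists_augmentation {M : Type u} [AddCommGroup M] [Module R M]
    (P : ProjectiveResolution (ModuleCat.of R M)) :
    ∃ π : P.complex.X 0 →ₗ[R] M, Function.Exact (P.complex.d 1 0).hom π ∧ Function.Surjective π :=
  ⟨(P.π.f 0).hom, (ShortComplex.ShortExact.moduleCat_exact_iff_function_exact _).1 P.exact₀,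
    (ModuleCat.epi_iff_surjective _).1 inferInstance⟩

theorem exact_subtype_range {A B C : Type u} [AddCommGroup A] [Module R A] [AddCommGroup B]
    [Module R B] [AddCommGroup C] [Module R C] {f : A →ₗ[R] B} {g : B →ₗ[R] C}
    (h : Function.Exact f g) : Function.Exact (LinearMap.range f).subtype g := by
  rw [LinearMap.exact_iff, Submodule.range_subtype]
  exact h.linearMap_ker_eq

theorem lTensor_rTensor_comm {A B C D : Type u} [AddCommGroup A] [Module R A] [AddCommGroup B]
    [Module R B] [AddCommGroup C] [Module R C] [AddCommGroup D] [Module R D]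
    (f : A →ₗ[R] B) (g : C →ₗ[R] D) (x : A ⊗[R] C) :
    g.lTensor B (f.rTensor C x) = f.rTensor D (g.lTensor A x) := by
  rw [← LinearMap.comp_apply, ← LinearMap.comp_apply, LinearMap.lTensor_comp_rTensor,
    LinearMap.rTensor_comp_lTensor]

section Snake
variable {L Q M P₂ P₁ P₀ F : Type u}
  [AddCommGroup L] [Module R L] [AddCommGroup Q] [Module R Q] [AddCommGroup M] [Module R M]
  [AddCommGroup P₂] [Module R P₂] [AddCommGroup P₁] [Module R P₁]
  [AddCommGroup P₀] [Module R P₀] [AddCommGroup F] [Module R F]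
  {i : L →ₗ[R] Q} {p : Q →ₗ[R] M} {d₂ : P₂ →ₗ[R] P₁} {d₁ : P₁ →ₗ[R] P₀} {π : P₀ →ₗ[R] F}

/-- One half of the snake lemma for `0 → L → Q → M → 0` tensored with `P₂ → P₁ → P₀ → F → 0`:
an element of `ker (L ⊗ F → Q ⊗ F)` is the image of a class in `Tor₁(M, F)` under the connecting
map, so `s` kills it once `s` kills `Tor₁(M, F)`. -/
theorem smul_ker_of_smul_tor [Module.Flat R P₀] (hi : Function.Injective i)
    (hip : Function.Exact i p) (hp : Function.Surjective p)
    (hd : Function.Exact d₁ π) (hπ : Function.Surjective π) {s : R}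
    (h : ∀ x : M ⊗[R] P₁, d₁.lTensor M x = 0 → ∃ y : M ⊗[R] P₂, d₂.lTensor M y = s • x)
    (hdd : d₁ ∘ₗ d₂ = 0)
    (y : L ⊗[R] F) (hy : i.rTensor F y = 0) : s • y = 0 := by
  obtain ⟨y, rfl⟩ := LinearMap.lTensor_surjective L hπ y
  rw [← lTensor_rTensor_comm] at hy
  obtain ⟨z, hz⟩ := (lTensor_exact Q hd hπ _).1 hy
  obtain ⟨v, hv⟩ := h (p.rTensor P₁ z) (by
    rw [lTensor_rTensor_comm, hz]
    exact (rTensor_exact P₀ hip hp).apply_apply_eq_zero y)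
  obtain ⟨v, rfl⟩ := LinearMap.rTensor_surjective P₂ hp v
  rw [lTensor_rTensor_comm, ← map_smul, ← sub_eq_zero, ← map_sub] at hv
  obtain ⟨w, hw⟩ := (rTensor_exact P₁ hip hp _).1 hv
  have key : i.rTensor P₀ (d₁.lTensor L (-w)) = i.rTensor P₀ (s • y) := by
    rw [← lTensor_rTensor_comm, map_neg, hw, map_smul, ← hz, map_neg, map_sub, map_smul,
      ← LinearMap.comp_apply (d₁.lTensor Q), ← LinearMap.lTensor_comp, hdd]
    simp
  have key := Module.Flat.rTensor_preserves_injective_linearMap (M := P₀) i hi key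
  rw [← map_smul, ← key]
  exact (lTensor_exact L hd hπ).apply_apply_eq_zero _

/-- The other half: when `Q` is flat, the connecting map from `Tor₁(M, F)` to
`ker (L ⊗ F → Q ⊗ F)` is injective, so `s` kills `Tor₁(M, F)` once it kills that kernel. -/
theorem smul_tor_of_smul_ker [Module.Flat R Q]
    (hip : Function.Exact i p) (hp : Function.Surjective p)
    (hd : Function.Exact d₁ π) (hπ : Function.Surjective π) (hdd : Function.Exact d₂ d₁) {s : R}
    (h : ∀ y : L ⊗[R] F, i.rTensor F y = 0 → s • y = 0)
    (x : M ⊗[R] P₁) (hx : d₁.lTensor M x = 0) : ∃ y : M ⊗[R] P₂, d₂.lTensor M y = s • x := by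
  obtain ⟨z, rfl⟩ := LinearMap.rTensor_surjective P₁ hp x
  rw [lTensor_rTensor_comm] at hx
  obtain ⟨y, hy⟩ := (rTensor_exact P₀ hip hp _).1 hx
  have hsy := h (π.lTensor L y) (by
    rw [← lTensor_rTensor_comm, hy]
    exact (lTensor_exact Q hd hπ).apply_apply_eq_zero _)
  rw [← map_smul] at hsy
  obtain ⟨w, hw⟩ := (lTensor_exact L hd hπ _).1 hsy
  obtain ⟨v, hv⟩ := (Module.Flat.lTensor_exact Q hdd (s • z - i.rTensor P₁ w)).1 (by
    rw [map_sub, lTensor_rTensor_comm, hw, map_smul, map_smul, hy, sub_self])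
  refine ⟨p.rTensor P₂ v, ?_⟩
  rw [lTensor_rTensor_comm, hv, map_sub, map_smul, (rTensor_exact P₁ hip hp).apply_apply_eq_zero,
    sub_zero]

end Snake

/-- `s` kills every `Tor₁(M, F)` as soon as it kills those with `M` finitely presented. Since `P₀` is
flat, a cycle `∑ mⱼ ⊗ pⱼ` of `M ⊗ P` is a cycle because of finitely many linear relations among the
`mⱼ`; imposing just these relations on free generators gives a finitely presented module over `M`
to which the cycle lifts. -/
theorem smul_tor_of_finitePresentation {P₂ P₁ P₀ : Type u}
    [AddCommGroup P₂] [Module R P₂] [AddCommGroup P₁] [Module R P₁]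
    [AddCommGroup P₀] [Module R P₀] [Module.Flat R P₀] {d₂ : P₂ →ₗ[R] P₁} {d₁ : P₁ →ₗ[R] P₀}
    {s : R}
    (h : ∀ (N : Type u) (_ : AddCommGroup N) (_ : Module R N), Module.FinitePresentation R N →
      ∀ x : N ⊗[R] P₁, d₁.lTensor N x = 0 → ∃ y : N ⊗[R] P₂, d₂.lTensor N y = s • x)
    {M : Type u} [AddCommGroup M] [Module R M]
    (x : M ⊗[R] P₁) (hx : d₁.lTensor M x = 0) : ∃ y : M ⊗[R] P₂, d₂.lTensor M y = s • x := by
  obtain ⟨t, rfl⟩ := TensorProduct.exists_finset x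
  obtain ⟨k, a, q, hq, ha⟩ :=
    TensorProduct.vanishesTrivially_of_sum_tmul_eq_zero_of_rTensor_injective R
      (m := fun j : t => j.1.1) (n := fun j : t => d₁ j.1.2)
      (Module.Flat.rTensor_preserves_injective_linearMap _ (Submodule.injective_subtype _)) (by
        rw [map_sum] at hx
        rw [Finset.sum_coe_sort t (fun j => j.1 ⊗ₜ[R] d₁ j.2)]
        simpa using hx)
  -- `W` is generated by the relations `∑ⱼ a j c • mⱼ = 0`, one for each `c`.
  let W : Submodule R (t → R) := Submodule.span R (Set.range fun (c : Fin k) j => a j c)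
  have hW : W ≤ LinearMap.ker (Fintype.linearCombination R fun j : t => j.1.1) := by
    refine Submodule.span_le.2 ?_
    rintro _ ⟨c, rfl⟩
    simpa [Fintype.linearCombination_apply] using ha c
  let φ : ((t → R) ⧸ W) →ₗ[R] M := W.liftQ _ hW
  have hfp : Module.FinitePresentation R ((t → R) ⧸ W) :=
    Module.finitePresentation_of_surjective W.mkQ W.mkQ_surjective (by
      rw [Submodule.ker_mkQ]
      exact Submodule.fg_span (Set.finite_range _))
  classical
  let e : t → (t → R) ⧸ W := fun j => W.mkQ (Pi.single j 1)
  have he (c : Fin k) : ∑ j, a j c • e j = 0 := by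
    have : ∑ j, a j c • (Pi.single j 1 : t → R) = fun j => a j c := by
      ext j; simp [Finset.sum_apply, Pi.single_apply]
    simp only [e, ← map_smul, ← map_sum, this]
    exact (Submodule.Quotient.mk_eq_zero W).2 (Submodule.subset_span ⟨c, rfl⟩)
  have hφ (j : t) : φ (e j) = j.1.1 := by
    simp [φ, e, Fintype.linearCombination_apply, Pi.single_apply]
  obtain ⟨y, hy⟩ := h _ _ _ hfp (∑ j : t, e j ⊗ₜ[R] j.1.2) (by
    simp only [map_sum, LinearMap.lTensor_tmul]
    exact TensorProduct.sum_tmul_eq_zero_of_vanishesTrivially R ⟨k, a, q, hq, he⟩)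
  refine ⟨φ.rTensor P₂ y, ?_⟩
  rw [lTensor_rTensor_comm, hy, map_smul, map_sum]
  simp only [LinearMap.rTensor_tmul, hφ]
  rw [Finset.sum_coe_sort t (fun j => j.1 ⊗ₜ[R] j.2)]

section Ext
variable {Q₂ Q₁ Q₀ N : Type u} [AddCommGroup Q₂] [Module R Q₂] [AddCommGroup Q₁] [Module R Q₁]
  [AddCommGroup Q₀] [Module R Q₀] [AddCommGroup N] [Module R N]
  {d₂ : Q₂ →ₗ[R] Q₁} {d₁ : Q₁ →ₗ[R] Q₀}

theorem exists_factor_range {X Y : Type u} [AddCommGroup X] [Module R X] [AddCommGroup Y]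
    [Module R Y] (k : X →ₗ[R] Y) (f : X →ₗ[R] N) (h : ∀ x, k x = 0 → f x = 0) :
    ∃ f' : LinearMap.range k →ₗ[R] N, ∀ x, f' (k.rangeRestrict x) = f x := by
  refine ⟨(LinearMap.ker k).liftQ f h ∘ₗ k.quotKerEquivRange.symm.toLinearMap, fun x => ?_⟩
  have : k.quotKerEquivRange.symm (k.rangeRestrict x) = (LinearMap.ker k).mkQ x :=
    k.quotKerEquivRange_symm_apply_image x _
  rw [LinearMap.comp_apply, LinearEquiv.coe_coe, this]
  rfl

/-- With `L = range d₁` the first syzygy, `s • Ext¹ = 0` says that every `s • f` with `f : L → N`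
extends to `Q₀`. -/
theorem smul_ext_iff_extend (hdd : Function.Exact d₂ d₁) (s : R) :
    (∀ f : Q₁ →ₗ[R] N, f ∘ₗ d₂ = 0 → ∃ g : Q₀ →ₗ[R] N, g ∘ₗ d₁ = s • f) ↔
    ∀ f : LinearMap.range d₁ →ₗ[R] N, ∃ g : Q₀ →ₗ[R] N,
      g ∘ₗ (LinearMap.range d₁).subtype = s • f := by
  constructor
  · intro h f
    obtain ⟨g, hg⟩ := h (f ∘ₗ d₁.rangeRestrict) (by
      ext x
      have : d₁.rangeRestrict (d₂ x) = 0 := Subtype.ext (hdd.apply_apply_eq_zero x)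
      simp [this])
    refine ⟨g, ?_⟩
    ext ⟨_, x, rfl⟩
    exact LinearMap.congr_fun hg x
  · intro h f hf
    obtain ⟨f', hf'⟩ := exists_factor_range d₁ f (by
      intro x hx
      obtain ⟨y, rfl⟩ := (hdd x).1 hx
      exact LinearMap.congr_fun hf y)
    obtain ⟨g, hg⟩ := h f'
    refine ⟨g, ?_⟩
    ext x
    rw [LinearMap.smul_apply, ← hf']
    exact LinearMap.congr_fun hg (d₁.rangeRestrict x)

variable {A B F E : Type u} [AddCommGroup A] [Module R A] [AddCommGroup B] [Module R B]
  [AddCommGroup F] [Module R F] [AddCommGroup E] [Module R E]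

/-- By adjunction, `f` is a map `A ⊗ F → E`; as `s • f` vanishes on the kernel of
`A ⊗ F → B ⊗ F`, it extends along this map by injectivity of `E`. -/
theorem extend_of_smul_ker (hE : Module.Injective R E) (i : A →ₗ[R] B) {s : R}
    (h : ∀ y : A ⊗[R] F, i.rTensor F y = 0 → s • y = 0) (f : A →ₗ[R] F →ₗ[R] E) :
    ∃ g : B →ₗ[R] F →ₗ[R] E, g ∘ₗ i = s • f := by
  let k := i.rTensor F
  obtain ⟨f₀, hf₀⟩ := exists_factor_range k (s • TensorProduct.lift f) (by
    intro x hx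
    rw [LinearMap.smul_apply, ← map_smul, h x hx, map_zero])
  obtain ⟨g, hg⟩ := hE.out (LinearMap.range k).subtype (Submodule.injective_subtype _) f₀
  refine ⟨TensorProduct.curry g, ?_⟩
  ext x y
  simpa [hf₀] using! (hg (k.rangeRestrict (x ⊗ₜ y))).trans (hf₀ (x ⊗ₜ y))

/-- Converse of `extend_of_smul_ker`, using the injective cogenerator `CharacterModule R`: maps
`A ⊗ F → CharacterModule R` amount to characters of `A ⊗ F`, and these separate points. -/
theorem smul_ker_of_extend (i : A →ₗ[R] B) {s : R}
    (h : ∀ f : A →ₗ[R] F →ₗ[R] CharacterModule R,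
      ∃ g : B →ₗ[R] F →ₗ[R] CharacterModule R, g ∘ₗ i = s • f)
    (y : A ⊗[R] F) (hy : i.rTensor F y = 0) : s • y = 0 := by
  refine CharacterModule.eq_zero_of_character_apply fun c => ?_
  let H : A ⊗[R] F →ₗ[R] CharacterModule R :=
    CharacterModule.curry (CharacterModule.dual (TensorProduct.rid R (A ⊗[R] F)).toLinearMap c)
  have hH (x) : H x 1 = c x := by
    change c (TensorProduct.rid R (A ⊗[R] F) (x ⊗ₜ 1)) = c x
    rw [TensorProduct.rid_tmul, one_smul]
  obtain ⟨g, hg⟩ := h (TensorProduct.curry H)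
  have key : TensorProduct.lift g ∘ₗ i.rTensor F = s • H := by
    refine TensorProduct.ext' fun a b => ?_
    exact LinearMap.congr_fun (LinearMap.congr_fun hg a) b
  rw [← hH, map_smul, ← LinearMap.smul_apply, ← key, LinearMap.comp_apply, hy, map_zero]
  rfl
end Ext

end Auxiliary

/-- For an `R`-module `F` the following are equivalent:
(1) there is `s ∈ S` with `s • Tor₁ᴿ(M, F) = 0` for every `R`-module `M` (`F` is
`u`-`S`-flat);
(2) there is `s ∈ S` with `s • Tor₁ᴿ(N, F) = 0` for every finitely presented `R`-module `N`;
(3) for every injective `R`-module `E` there is `s ∈ S` with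
`s • Ext¹_R(M, Hom_R(F, E)) = 0` for every `R`-module `M` (`Hom_R(F, E)` is
`u`-`S`-injective). -/
theorem usFlat_tfae (S : Submonoid R) (F : Type u) [AddCommGroup F] [Module R F] :
    [ ∃ s ∈ S, ∀ (M : Type u) (_ : AddCommGroup M) (_ : Module R M),
        ∀ x : ((Tor (ModuleCat.{u} R) 1).obj (ModuleCat.of R M)).obj (ModuleCat.of R F),
          s • x = 0,
      ∃ s ∈ S, ∀ (N : Type u) (_ : AddCommGroup N) (_ : Module R N),
        Module.FinitePresentation R N →
        ∀ x : ((Tor (ModuleCat.{u} R) 1).obj (ModuleCat.of R N)).obj (ModuleCat.of R F),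
          s • x = 0,
      ∀ (E : Type u) (_ : AddCommGroup E) (_ : Module R E), Module.Injective R E →
        ∃ s ∈ S, ∀ (M : Type u) (_ : AddCommGroup M) (_ : Module R M),
          ∀ x : ((Ext R (ModuleCat.{u} R) 1).obj
              (Opposite.op (ModuleCat.of R M))).obj (ModuleCat.of R (F →ₗ[R] E)),
            s • x = 0 ].TFAE := by
  tfae_have 1 → 2 := fun ⟨s, hs, h⟩ => ⟨s, hs, fun N _ _ _ => h N _ _⟩
  tfae_have 2 → 1 := by
    rintro ⟨s, hs, h⟩
    refine ⟨s, hs, fun M _ _ => ?_⟩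
    let P := projectiveResolution (ModuleCat.of R F)
    have := flat_res P 0
    rw [smul_tor_iff P]
    exact smul_tor_of_finitePresentation fun N _ _ hN => (smul_tor_iff P N s).1 (h N _ _ hN)
  tfae_have 1 → 3 := by
    rintro ⟨s, hs, h⟩ E _ _ hE
    refine ⟨s, hs, fun M _ _ => ?_⟩
    let P := projectiveResolution (ModuleCat.of R F)
    let Q := projectiveResolution (ModuleCat.of R M)
    have := flat_res P 0
    obtain ⟨π, hπ, hπs⟩ := exists_augmentation P
    obtain ⟨p, hp, hps⟩ := exists_augmentation Q
    rw [smul_ext_iff Q, smul_ext_iff_extend (exact_res Q)]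
    refine extend_of_smul_ker hE _ ?_
    exact smul_ker_of_smul_tor (Submodule.injective_subtype _) (exact_subtype_range hp) hps hπ hπs
      ((smul_tor_iff P M s).1 (h M _ _)) (exact_res P).linearMap_comp_eq_zero
  tfae_have 3 → 1 := by
    intro h
    obtain ⟨s, hs, h⟩ := h (CharacterModule R) _ _
      (Module.Flat.iff_characterModule_injective.1 inferInstance)
    refine ⟨s, hs, fun M _ _ => ?_⟩
    let P := projectiveResolution (ModuleCat.of R F)
    let Q := projectiveResolution (ModuleCat.of R M)
    have := flat_res Q 0
    obtain ⟨π, hπ, hπs⟩ := exists_augmentation P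
    obtain ⟨p, hp, hps⟩ := exists_augmentation Q
    have hM := h M inferInstance inferInstance
    rw [smul_ext_iff Q, smul_ext_iff_extend (exact_res Q)] at hM
    rw [smul_tor_iff P]
    exact smul_tor_of_smul_ker (exact_subtype_range hp) hps hπ hπs (exact_res P)
      (smul_ker_of_extend _ hM)
  tfae_finish
end
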